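/- Let d ≥ 3 and let D ⊂ ℝ^d be a bounded domain with C² connected boundary. Then for all x₁, x₂, x₃, x₄ ∈ D: d_H(x₁,x₂) + d_H(x₃,x₄) ≤ max( d_H(x₁,x₃) + d_H(x₂,x₄), d_H(x₁,x₄) + d_H(x₂,x₃) ) + 4 log 2. In particular (D, d_H) is Gromov hyperbolic with δ = 2 log 2. -/

import Mathlib

/-!
Write `r x y = H(π x, π y) + max (h x) (h y)`. Since `H` satisfies the triangle inequality, so does
`r`, and hence `r x z ≤ 2 max (r x y) (r y z)`: up to the additive constant `log 2`, the function
`log r` is an ultrametric. In an ultrametric, for any four points the two largest of the three sums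
of opposite sides agree, and with an additive error `c` this becomes a four-point condition with
constant `2 c`. As `d_H(x, y) = 2 log r x y - log h(x) - log h(y)`, and the terms in `h` contribute
the same amount to all three sums, `d_H` satisfies the four-point condition with constant `4 log 2`.

The triangle inequality for `H` comes from concatenating curves. Because a real infimum over the
empty set is `0`, it holds only once any two boundary points are known to be joined by some curve
in `∂D`. Nearby points are, by the implicit function theorem, and connectedness of `∂D` does the
rest.
-/

open scoped RealInnerProductSpace ENNReal
open Metric Set Filter

noncomputable section

/-- Euclidean space `ℝ^d`. -/
abbrev Euc (d : ℕ) := EuclideanSpace ℝ (Fin d)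

/-- The open unit disk in `ℝ²`. -/
def unitDisk : Set (Euc 2) := Metric.ball 0 1

/-- Partial derivative of `f` at `z` in the `i`-th coordinate direction. -/
def pd {d : ℕ} (i : Fin 2) (f : Euc 2 → Euc d) (z : Euc 2) : Euc d :=
  fderiv ℝ f z (EuclideanSpace.single i 1)

/-- `f` is a conformal harmonic map on the unit disk: it is `C²`, its (vector)
Laplacian vanishes (equivalently, every component is harmonic), and at each point
its two partial derivatives are orthogonal and of equal norm. -/
def ConformalHarmonicOnDisk {d : ℕ} (f : Euc 2 → Euc d) : Prop :=
  ContDiffOn ℝ 2 f unitDisk ∧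
  (∀ z ∈ unitDisk,
    fderiv ℝ (pd 0 f) z (EuclideanSpace.single 0 1)
      + fderiv ℝ (pd 1 f) z (EuclideanSpace.single 1 1) = 0) ∧
  (∀ z ∈ unitDisk, ‖pd 0 f z‖ = ‖pd 1 f z‖ ∧ ⟪pd 0 f z, pd 1 f z⟫ = 0)

/-- The minimal (Forstnerič–Kalaj) metric of a domain `D ⊆ ℝ^d`:
`g_D(x,v) = inf {1/r : r > 0, f ∈ CH(𝔻, D), f 0 = x, f_x 0 = r • v}`. -/
def minMetric {d : ℕ} (D : Set (Euc d)) (x v : Euc d) : ℝ :=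
  sInf {c : ℝ | ∃ r : ℝ, 0 < r ∧ c = 1 / r ∧
    ∃ f : Euc 2 → Euc d, ConformalHarmonicOnDisk f ∧ (∀ z ∈ unitDisk, f z ∈ D) ∧
      f 0 = x ∧ pd 0 f 0 = r • v}

/-- `γ` is a piecewise `C¹` curve on `[a, b]`. -/
def PiecewiseC1On {d : ℕ} (γ : ℝ → Euc d) (a b : ℝ) : Prop :=
  ContinuousOn γ (Set.Icc a b) ∧
  ∃ (n : ℕ) (t : Fin (n + 2) → ℝ), Monotone t ∧ t 0 = a ∧ t (Fin.last (n + 1)) = b ∧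
    ∀ i : Fin (n + 1), ContDiffOn ℝ 1 γ (Set.Icc (t i.castSucc) (t i.succ))

/-- The minimal pseudodistance `ρ_D`: infimum of minimal lengths of piecewise `C¹`
curves in `D` joining `x` to `y`. -/
def minDist {d : ℕ} (D : Set (Euc d)) (x y : Euc d) : ℝ :=
  sInf {L : ℝ | ∃ γ : ℝ → Euc d, PiecewiseC1On γ 0 1 ∧
    (∀ t ∈ Set.Icc (0:ℝ) 1, γ t ∈ D) ∧ γ 0 = x ∧ γ 1 = y ∧
    L = ∫ t in (0:ℝ)..(1:ℝ), minMetric D (γ t) (deriv γ t)}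

/-- The Gromov product `(x|y)_o` with respect to the minimal pseudodistance of `D`. -/
def gromovProd {d : ℕ} (D : Set (Euc d)) (o x y : Euc d) : ℝ :=
  (minDist D x o + minDist D y o - minDist D x y) / 2

/-- `D` is hyperbolic: the minimal pseudodistance is a genuine distance. -/
def MinHyperbolic {d : ℕ} (D : Set (Euc d)) : Prop :=
  ∀ x ∈ D, ∀ y ∈ D, x ≠ y → 0 < minDist D x y

/-- The Hessian quadratic form of `u` at `x` in direction `v`. -/
def hessQ {d : ℕ} (u : Euc d → ℝ) (x v : Euc d) : ℝ :=
  fderiv ℝ (fun y => fderiv ℝ u y v) x v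

/-- `D` is a bounded domain with `C²` boundary, described by a `C²` defining
function `u` on a neighborhood `U` of `∂D` with nonvanishing differential. -/
def IsC2BoundedDomain {d : ℕ} (D : Set (Euc d)) : Prop :=
  IsOpen D ∧ IsConnected D ∧ Bornology.IsBounded D ∧
  ∃ (U : Set (Euc d)) (u : Euc d → ℝ), IsOpen U ∧ frontier D ⊆ U ∧ ContDiffOn ℝ 2 u U ∧
    D ∩ U = {x | x ∈ U ∧ u x < 0} ∧ frontier D = {x | x ∈ U ∧ u x = 0} ∧
    ∀ x ∈ frontier D, fderiv ℝ u x ≠ 0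

/-- `D` is a bounded strongly minimally convex domain: it has a `C²` defining function
which is strongly minimally plurisubharmonic near `∂D`, i.e. the trace of its Hessian
on every 2-plane (spanned by an orthonormal pair `v, w`) is strictly positive. -/
def IsStronglyMinimallyConvex {d : ℕ} (D : Set (Euc d)) : Prop :=
  IsOpen D ∧ IsConnected D ∧ Bornology.IsBounded D ∧
  ∃ (U : Set (Euc d)) (u : Euc d → ℝ), IsOpen U ∧ frontier D ⊆ U ∧ ContDiffOn ℝ 2 u U ∧
    D ∩ U = {x | x ∈ U ∧ u x < 0} ∧ frontier D = {x | x ∈ U ∧ u x = 0} ∧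
    (∀ x ∈ frontier D, fderiv ℝ u x ≠ 0) ∧
    (∀ x ∈ U, ∀ v w : Euc d, ‖v‖ = 1 → ‖w‖ = 1 → ⟪v, w⟫ = 0 →
      0 < hessQ u x v + hessQ u x w)

/-- `D` is a bounded strongly convex domain: convex, with a `C²` defining function whose
Hessian is positive definite on the tangent space at every boundary point
(equivalently, all principal curvatures of `∂D` w.r.t. the inner normal are positive). -/
def IsStronglyConvexDomain {d : ℕ} (D : Set (Euc d)) : Prop :=
  IsOpen D ∧ IsConnected D ∧ Bornology.IsBounded D ∧ Convex ℝ D ∧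
  ∃ (U : Set (Euc d)) (u : Euc d → ℝ), IsOpen U ∧ frontier D ⊆ U ∧ ContDiffOn ℝ 2 u U ∧
    D ∩ U = {x | x ∈ U ∧ u x < 0} ∧ frontier D = {x | x ∈ U ∧ u x = 0} ∧
    (∀ x ∈ frontier D, fderiv ℝ u x ≠ 0) ∧
    (∀ ξ ∈ frontier D, ∀ w : Euc d, w ≠ 0 → fderiv ℝ u ξ w = 0 → 0 < hessQ u ξ w)

/-- For `x ∈ D` with nearest boundary point `p`, the outer unit normal direction
`n_{π(x)} = (p - x)/‖p - x‖`. -/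
def nvec {d : ℕ} (x p : Euc d) : Euc d := ‖p - x‖⁻¹ • (p - x)

/-- Normal component of `v` at `x` with nearest boundary point `p`. -/
def vN {d : ℕ} (x p v : Euc d) : Euc d := ⟪v, nvec x p⟫ • nvec x p

/-- Tangential component of `v` at `x` with nearest boundary point `p`. -/
def vT {d : ℕ} (x p v : Euc d) : Euc d := v - vN x p v

/-- The intrinsic distance `H` on the boundary `∂D`: infimum of Euclidean lengths of
piecewise `C¹` curves in `∂D` joining two boundary points. -/
def bdist {d : ℕ} (D : Set (Euc d)) (ξ η : Euc d) : ℝ :=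
  sInf {L : ℝ | ∃ α : ℝ → Euc d, PiecewiseC1On α 0 1 ∧
    (∀ t ∈ Set.Icc (0:ℝ) 1, α t ∈ frontier D) ∧ α 0 = ξ ∧ α 1 = η ∧
    L = ∫ t in (0:ℝ)..(1:ℝ), ‖deriv α t‖}

/-- `h(x) = δ_D(x)^{1/2}`. -/
def hfun {d : ℕ} (D : Set (Euc d)) (x : Euc d) : ℝ :=
  Real.sqrt (Metric.infDist x (frontier D))

/-- The length of a curve with respect to the boundary Finsler metric
`F(x,v) = ‖v_N‖/(2 δ_D(x)) + ‖v_T‖/δ_D(x)^{1/2}`. -/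
def Flen {d : ℕ} (D : Set (Euc d)) (π : Euc d → Euc d) (γ : ℝ → Euc d) : ℝ :=
  ∫ t in (0:ℝ)..(1:ℝ),
    (‖vN (γ t) (π (γ t)) (deriv γ t)‖ / (2 * Metric.infDist (γ t) (frontier D))
      + ‖vT (γ t) (π (γ t)) (deriv γ t)‖ / Real.sqrt (Metric.infDist (γ t) (frontier D)))

/-- The filling Finsler metric `F`: the boundary Finsler metric on
`N = {δ_D ≤ ε}` and `c‖v‖` elsewhere. -/
def Fmet {d : ℕ} (D : Set (Euc d)) (π : Euc d → Euc d) (ε c : ℝ) (x v : Euc d) : ℝ :=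
  if Metric.infDist x (frontier D) ≤ ε then
    ‖vN x (π x) v‖ / (2 * Metric.infDist x (frontier D))
      + ‖vT x (π x) v‖ / Real.sqrt (Metric.infDist x (frontier D))
  else c * ‖v‖

/-- The intrinsic distance `d_F` associated to the filling Finsler metric `F`. -/
def dF {d : ℕ} (D : Set (Euc d)) (π : Euc d → Euc d) (ε c : ℝ) (x y : Euc d) : ℝ :=
  sInf {L : ℝ | ∃ γ : ℝ → Euc d, PiecewiseC1On γ 0 1 ∧
    (∀ t ∈ Set.Icc (0:ℝ) 1, γ t ∈ D) ∧ γ 0 = x ∧ γ 1 = y ∧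
    L = ∫ t in (0:ℝ)..(1:ℝ), Fmet D π ε c (γ t) (deriv γ t)}

/-- The hyperbolic filling distance
`d_H(x,y) = 2 log((H(π x, π y) + h(x) ∨ h(y)) / √(h(x) h(y)))`. -/
def dH {d : ℕ} (D : Set (Euc d)) (π : Euc d → Euc d) (x y : Euc d) : ℝ :=
  2 * Real.log ((bdist D (π x) (π y) + max (hfun D x) (hfun D y)) /
    Real.sqrt (hfun D x * hfun D y))

/-- `δ̂_D(x,v)`: the supremum over 2-dimensional linear subspaces `Λ ∋ v` of the
distance (in `ℝ≥0∞`, so `∞` if `x + Λ ⊆ D`) from `x` to `(x + Λ) \ D`. -/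
def deltaHat {d : ℕ} (D : Set (Euc d)) (x v : Euc d) : ℝ≥0∞ :=
  ⨆ (Λ : Submodule ℝ (Euc d)) (_ : Module.finrank ℝ Λ = 2) (_ : v ∈ Λ),
    ⨅ (y : Euc d) (_ : y - x ∈ Λ ∧ y ∉ D), edist x y

/-- The positive parameter at which the ray `t ↦ x + t • v` exits the convex domain `D`
(equal to `0`, by the `sInf ∅ = 0` convention, when the ray stays in `D`,
i.e. when the corresponding chord endpoint is the point at infinity). -/
def chordParam {d : ℕ} (D : Set (Euc d)) (x v : Euc d) : ℝ :=
  sInf {s : ℝ | 0 < s ∧ x + s • v ∉ D}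

/-- The Hilbert Finsler metric `h_D(x,v) = (‖v‖/2)(1/‖x-a‖ + 1/‖x-b‖)` of a convex
domain, with the convention `1/‖x-∞‖ = 0` (here `‖x-b‖ = chordParam D x v • ‖v‖` and
`‖x-a‖ = chordParam D x (-v) • ‖v‖`, and division by zero is zero). -/
def hilbertFinsler {d : ℕ} (D : Set (Euc d)) (x v : Euc d) : ℝ :=
  (1/2) * (1 / chordParam D x v + 1 / chordParam D x (-v))

/- The Hilbert distance of a convex domain: for `x ≠ y`,
`H_D(x,y) = ½ log((‖x-b‖ ‖y-a‖)/(‖x-a‖ ‖y-b‖))` where `a, x, y, b` are aligned on the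
chord through `x, y`, with the convention that ratios involving the point at infinity
(detected by `chordParam = 0`) are equal to `1`. -/
open Classical in
def hilbertDist {d : ℕ} (D : Set (Euc d)) (x y : Euc d) : ℝ :=
  if x = y then 0 else
    (1/2) * Real.log
      ((if chordParam D x (y - x) = 0 then 1
        else chordParam D x (y - x) / (chordParam D x (y - x) - 1)) *
       (if chordParam D x (x - y) = 0 then 1
        else (1 + chordParam D x (x - y)) / chordParam D x (x - y)))

/-! ### Four-point conditions -/

section FourPoint

variable {X : Type*} {ρ σ : X → X → ℝ} {c : ℝ}

/-- Gromov's four-point condition with additive constant `c`. For a distance it is Gromov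
hyperbolicity with `δ = c / 2`. -/
def FourPoint (ρ : X → X → ℝ) (c : ℝ) : Prop :=
  ∀ x₁ x₂ x₃ x₄, ρ x₁ x₂ + ρ x₃ x₄ ≤ max (ρ x₁ x₃ + ρ x₂ x₄) (ρ x₁ x₄ + ρ x₂ x₃) + c

/-- The ultrametric triangle inequality up to an additive constant `c`. Unlike a distance, `ρ` is
allowed to take negative values, as the logarithm of a distance does. -/
def IsQuasiUltrametric (ρ : X → X → ℝ) (c : ℝ) : Prop :=
  ∀ x y z, ρ x z ≤ max (ρ x y) (ρ y z) + c

lemma IsQuasiUltrametric.fourPoint (hρ : IsQuasiUltrametric ρ c) (comm : ∀ x y, ρ x y = ρ y x) :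
    FourPoint ρ (2 * c) := by
  intro x₁ x₂ x₃ x₄
  have h₁₃₂ := hρ x₁ x₃ x₂
  have h₁₄₂ := hρ x₁ x₄ x₂
  have h₃₁₄ := hρ x₃ x₁ x₄
  have h₃₂₄ := hρ x₃ x₂ x₄
  rw [comm x₃] at h₁₃₂ h₃₁₄ h₃₂₄
  -- Whichever of the four values on the right is largest, the two bounds not involving it suffice.
  grind

lemma FourPoint.of_eq_mul_sub {k : ℝ} {f : X → ℝ} (hρ : FourPoint ρ c) (hk : 0 ≤ k)
    (hσ : ∀ x y, σ x y = k * ρ x y - f x - f y) : FourPoint σ (k * c) := by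
  intro x₁ x₂ x₃ x₄
  have h := mul_le_mul_of_nonneg_left (hρ x₁ x₂ x₃ x₄) hk
  rw [mul_add k (max _ _), mul_max_of_nonneg _ _ hk] at h
  simp only [hσ]
  grind

lemma isQuasiUltrametric_log {r : X → X → ℝ} (pos : ∀ x y, 0 < r x y)
    (triangle : ∀ x y z, r x z ≤ r x y + r y z) :
    IsQuasiUltrametric (fun x y => Real.log (r x y)) (Real.log 2) := by
  intro x y z
  have hmax : 0 < max (r x y) (r y z) := lt_max_of_lt_left (pos x y)
  calc Real.log (r x z)
      ≤ Real.log (max (r x y) (r y z) * 2) := by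
        refine Real.log_le_log (pos x z) ((triangle x y z).trans ?_)
        linarith [le_max_left (r x y) (r y z), le_max_right (r x y) (r y z)]
    _ = max (Real.log (r x y)) (Real.log (r y z)) + Real.log 2 := by
        rw [Real.log_mul hmax.ne' two_ne_zero,
          Real.strictMonoOn_log.monotoneOn.map_max (pos x y) (pos y z)]

end FourPoint

/-! ### Hyperbolic fillings -/

section Filling

variable {X : Type*} {H : X → X → ℝ} {h : X → ℝ}

/-- The quantity `r x y` whose logarithm is the main term of the hyperbolic filling distance. Here
`H` is a pseudodistance on the space `X` of the filling itself, pulled back from the base, and `h`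
is the square root of the height. -/
def fillingGauge (H : X → X → ℝ) (h : X → ℝ) (x y : X) : ℝ :=
  H x y + max (h x) (h y)

/-- The hyperbolic filling distance of a pseudodistance `H` and a height function `h ^ 2`. -/
def fillingDist (H : X → X → ℝ) (h : X → ℝ) (x y : X) : ℝ :=
  2 * Real.log (fillingGauge H h x y / √(h x * h y))

lemma fillingGauge_comm (comm : ∀ x y, H x y = H y x) (x y : X) :
    fillingGauge H h x y = fillingGauge H h y x := by
  rw [fillingGauge, fillingGauge, comm, max_comm]

lemma fillingGauge_pos (comm : ∀ x y, H x y = H y x) (triangle : ∀ x y z, H x z ≤ H x y + H y z)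
    {x : X} (hx : 0 < h x) (y : X) : 0 < fillingGauge H h x y := by
  have hH : 0 ≤ H x y := by linarith [triangle x x x, triangle x y x, comm x y]
  exact add_pos_of_nonneg_of_pos hH (lt_max_of_lt_left hx)

lemma fillingGauge_triangle (triangle : ∀ x y z, H x z ≤ H x y + H y z) (x z : X) {y : X}
    (hy : 0 ≤ h y) : fillingGauge H h x z ≤ fillingGauge H h x y + fillingGauge H h y z := by
  have hmax : max (h x) (h z) ≤ max (h x) (h y) + max (h y) (h z) := by grind
  unfold fillingGauge
  linarith [triangle x y z]

lemma fillingDist_eq {x y : X} (hx : 0 < h x) (hy : 0 < h y) (hr : fillingGauge H h x y ≠ 0) :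
    fillingDist H h x y =
      2 * Real.log (fillingGauge H h x y) - Real.log (h x) - Real.log (h y) := by
  have hxy := mul_pos hx hy
  rw [fillingDist, Real.log_div hr (Real.sqrt_pos.2 hxy).ne', Real.log_sqrt hxy.le,
    Real.log_mul hx.ne' hy.ne']
  ring

theorem fourPoint_fillingDist (comm : ∀ x y, H x y = H y x)
    (triangle : ∀ x y z, H x z ≤ H x y + H y z) (pos : ∀ x, 0 < h x) :
    FourPoint (fillingDist H h) (4 * Real.log 2) := by
  have gauge_pos (x y : X) := fillingGauge_pos comm triangle (pos x) y
  have log_gauge : FourPoint (fun x y => Real.log (fillingGauge H h x y)) (2 * Real.log 2) :=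
    (isQuasiUltrametric_log gauge_pos fun x y z =>
      fillingGauge_triangle triangle x z (pos y).le).fourPoint
      fun x y => by rw [fillingGauge_comm comm]
  convert log_gauge.of_eq_mul_sub zero_le_two fun x y =>
    fillingDist_eq (pos x) (pos y) (gauge_pos x y).ne' using 1
  ring

end Filling

/-! ### Piecewise `C¹` curves -/

section Concat

variable {X : Type*} {α β : ℝ → X}

/-- The curve on `[0, 1]` that runs through `α` and then `β`, both at double speed. The `- 0` gives
both halves the form `t ↦ γ (k * t - e)`. -/
def curveConcat (α β : ℝ → X) (t : ℝ) : X :=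
  if t ≤ 1 / 2 then α (2 * t - 0) else β (2 * t - 1)

lemma curveConcat_eqOn_left (α β : ℝ → X) :
    EqOn (curveConcat α β) (fun t => α (2 * t - 0)) (Icc 0 (1 / 2)) :=
  fun _ ht => if_pos ht.2

lemma curveConcat_eqOn_right (h : α 1 = β 0) :
    EqOn (curveConcat α β) (fun t => β (2 * t - 1)) (Icc (1 / 2) 1) := by
  intro t ht
  rcases ht.1.eq_or_lt with rfl | hlt
  · simp [curveConcat, h]
  · exact if_neg hlt.not_ge

lemma mapsTo_curveConcat {S : Set X} (hα : MapsTo α (Icc 0 1) S) (hβ : MapsTo β (Icc 0 1) S) :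
    MapsTo (curveConcat α β) (Icc 0 1) S := by
  intro t ht
  unfold curveConcat
  split_ifs with h
  · exact hα ⟨by linarith [ht.1], by linarith⟩
  · exact hβ ⟨by linarith, by linarith [ht.2]⟩

end Concat

section Curves

variable {E : Type*} [NormedAddCommGroup E] [NormedSpace ℝ E]

/-- `C1Chain γ a b`: the interval `[a, b]` is a finite concatenation of closed intervals on each of
which `γ` is `C¹`. This is `PiecewiseC1On` with the indexed subdivision replaced by an inductive
one, so that curves can be treated one piece at a time. -/
inductive C1Chain (γ : ℝ → E) (a : ℝ) : ℝ → Prop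
  | refl : C1Chain γ a a
  | snoc {b c : ℝ} : C1Chain γ a b → b ≤ c → ContDiffOn ℝ 1 γ (Icc b c) → C1Chain γ a c

/-- The length of a curve, defined through `deriv` and thus insensitive to finitely many corners. -/
def curveLength (γ : ℝ → E) (a b : ℝ) : ℝ :=
  ∫ t in a..b, ‖deriv γ t‖

variable {γ α β : ℝ → E} {a b c k : ℝ}

namespace C1Chain

lemma le (h : C1Chain γ a b) : a ≤ b := by
  induction h with
  | refl => exact le_rfl
  | snoc _ h _ ih => exact ih.trans h

lemma of_contDiffOn (hab : a ≤ b) (h : ContDiffOn ℝ 1 γ (Icc a b)) : C1Chain γ a b :=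
  refl.snoc hab h

lemma trans (h₁ : C1Chain γ a b) (h₂ : C1Chain γ b c) : C1Chain γ a c := by
  induction h₂ with
  | refl => exact h₁
  | snoc _ h h' ih => exact ih.snoc h h'

lemma continuousOn (h : C1Chain γ a b) : ContinuousOn γ (Icc a b) := by
  induction h with
  | refl => simp
  | snoc h₁ h h' ih =>
    rw [← Icc_union_Icc_eq_Icc h₁.le h]
    exact ih.union_of_isClosed h'.continuousOn isClosed_Icc isClosed_Icc

lemma congr (h : C1Chain γ a b) (he : EqOn α γ (Icc a b)) : C1Chain α a b := by
  induction h with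
  | refl => exact refl
  | snoc h₁ h h' ih =>
    exact (ih (he.mono (Icc_subset_Icc_right h))).snoc h
      (h'.congr (he.mono (Icc_subset_Icc_left h₁.le)))

lemma comp_mul_sub (hk : 0 < k) (e : ℝ) (h : C1Chain γ a b) :
    C1Chain (fun t => γ (k * t - e)) ((a + e) / k) ((b + e) / k) := by
  induction h with
  | refl => exact refl
  | snoc _ h h' ih =>
    refine ih.snoc (by gcongr) (h'.comp (by fun_prop) fun t ht => ?_)
    rw [mem_Icc, div_le_iff₀ hk, le_div_iff₀ hk] at ht
    constructor <;> linarith [ht.1, ht.2]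

lemma comp_const_sub (e : ℝ) (h : C1Chain γ a b) :
    C1Chain (fun t => γ (e - t)) (e - b) (e - a) := by
  induction h with
  | refl => exact refl
  | snoc _ h h' ih =>
    refine (of_contDiffOn (by gcongr) (h'.comp (by fun_prop) fun t ht => ?_)).trans ih
    constructor <;> linarith [ht.1, ht.2]

lemma intervalIntegrable_norm_deriv (h : C1Chain γ a b) :
    IntervalIntegrable (fun t => ‖deriv γ t‖) MeasureTheory.volume a b := by
  induction h with
  | refl => exact .refl
  | @snoc b c _ h h' ih =>
    refine ih.trans ?_
    rcases h.eq_or_lt with rfl | hlt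
    · exact .refl
    -- The one-sided derivative is continuous up to the corners, and between them it is `deriv`.
    have hc : ContinuousOn (fun t => ‖derivWithin γ (Icc b c) t‖) (uIcc b c) := by
      rw [uIcc_of_le h]
      exact (h'.continuousOn_derivWithin (uniqueDiffOn_Icc hlt) le_rfl).norm
    refine hc.intervalIntegrable.congr_uIoo fun t ht => ?_
    rw [uIoo_of_le h] at ht
    exact congrArg norm (derivWithin_of_mem_nhds (Icc_mem_nhds ht.1 ht.2))

end C1Chain

lemma curveLength_nonneg (hab : a ≤ b) : 0 ≤ curveLength γ a b :=
  intervalIntegral.integral_nonneg hab fun _ _ => norm_nonneg _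

lemma curveLength_congr (hab : a ≤ b) (h : EqOn α β (Icc a b)) :
    curveLength α a b = curveLength β a b :=
  intervalIntegral.integral_congr_Ioo_of_le hab fun _ ht => congrArg norm
    (h.eventuallyEq_of_mem (Icc_mem_nhds ht.1 ht.2)).deriv_eq

lemma curveLength_add (hab : C1Chain γ a b) (hbc : C1Chain γ b c) :
    curveLength γ a b + curveLength γ b c = curveLength γ a c :=
  intervalIntegral.integral_add_adjacent_intervals hab.intervalIntegrable_norm_deriv
    hbc.intervalIntegrable_norm_deriv

lemma curveLength_comp_mul_sub (γ : ℝ → E) (hk : 0 ≤ k) (e a b : ℝ) :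
    curveLength (fun t => γ (k * t - e)) a b = curveLength γ (k * a - e) (k * b - e) := by
  have hderiv (t : ℝ) : ‖deriv (fun t => γ (k * t - e)) t‖ = k • ‖deriv γ (k * t - e)‖ := by
    rw [deriv_comp_mul_left k (fun s => γ (s - e)), deriv_comp_sub_const, norm_smul,
      Real.norm_of_nonneg hk, smul_eq_mul]
  simp only [curveLength, hderiv]
  rw [intervalIntegral.integral_smul,
    intervalIntegral.smul_integral_comp_mul_sub fun t => ‖deriv γ t‖]

lemma curveLength_comp_const_sub (γ : ℝ → E) (e a b : ℝ) :
    curveLength (fun t => γ (e - t)) a b = curveLength γ (e - b) (e - a) := by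
  simp only [curveLength, deriv_comp_const_sub, norm_neg]
  exact intervalIntegral.integral_comp_sub_left (fun t => ‖deriv γ t‖) e

lemma C1Chain.curveConcat_left (hα : C1Chain α 0 1) : C1Chain (curveConcat α β) 0 (1 / 2) :=
  .congr (by simpa using hα.comp_mul_sub two_pos 0) (curveConcat_eqOn_left α β)

lemma C1Chain.curveConcat_right (hβ : C1Chain β 0 1) (h : α 1 = β 0) :
    C1Chain (curveConcat α β) (1 / 2) 1 :=
  .congr (by simpa [one_add_one_eq_two] using hβ.comp_mul_sub two_pos 1) (curveConcat_eqOn_right h)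

lemma curveLength_curveConcat (hα : C1Chain α 0 1) (hβ : C1Chain β 0 1) (h : α 1 = β 0) :
    curveLength (curveConcat α β) 0 1 = curveLength α 0 1 + curveLength β 0 1 := by
  rw [← curveLength_add hα.curveConcat_left (hβ.curveConcat_right h),
    curveLength_congr (by norm_num) (curveConcat_eqOn_left α β),
    curveLength_congr (by norm_num) (curveConcat_eqOn_right h),
    curveLength_comp_mul_sub α zero_le_two, curveLength_comp_mul_sub β zero_le_two]
  norm_num

end Curves

section PiecewiseC1On

variable {d : ℕ} {γ : ℝ → Euc d} {a b c : ℝ}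

lemma PiecewiseC1On.refl (γ : ℝ → Euc d) (a : ℝ) : PiecewiseC1On γ a a :=
  ⟨by simp, 0, fun _ => a, monotone_const, rfl, rfl, fun _ => by
    rw [Icc_self]
    exact fun _ h => h ▸ contDiffWithinAt_singleton⟩

lemma PiecewiseC1On.snoc (h : PiecewiseC1On γ a b) (hab : a ≤ b) (hbc : b ≤ c)
    (hγ : ContDiffOn ℝ 1 γ (Icc b c)) : PiecewiseC1On γ a c := by
  obtain ⟨hcont, n, t, ht, h0, hlast, hpiece⟩ := h
  refine ⟨?_, n + 1, Fin.snoc (α := fun _ => ℝ) t c, ?_, ?_, by rw [Fin.snoc_last], fun i => ?_⟩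
  · rw [← Icc_union_Icc_eq_Icc hab hbc]
    exact hcont.union_of_isClosed hγ.continuousOn isClosed_Icc isClosed_Icc
  · refine Fin.monotone_iff_le_succ.2 fun i => ?_
    cases i using Fin.lastCases with
    | last => rwa [Fin.succ_last, Fin.snoc_last, Fin.snoc_castSucc, hlast]
    | cast j =>
      rw [Fin.succ_castSucc, Fin.snoc_castSucc, Fin.snoc_castSucc]
      exact ht (Fin.castSucc_le_succ j)
  · rw [← Fin.castSucc_zero, Fin.snoc_castSucc, h0]
  · cases i using Fin.lastCases with
    | last => rwa [Fin.succ_last, Fin.snoc_last, Fin.snoc_castSucc, hlast]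
    | cast j =>
      rw [Fin.succ_castSucc, Fin.snoc_castSucc, Fin.snoc_castSucc]
      exact hpiece j

lemma piecewiseC1On_iff_c1Chain : PiecewiseC1On γ a b ↔ C1Chain γ a b := by
  constructor
  · rintro ⟨-, n, t, ht, rfl, rfl, hpiece⟩
    have chain (i : Fin (n + 2)) : C1Chain γ (t 0) (t i) := by
      induction i using Fin.induction with
      | zero => exact .refl
      | succ i ih => exact ih.snoc (ht (Fin.castSucc_le_succ i)) (hpiece i)
    exact chain _
  · intro h
    induction h with
    | refl => exact .refl γ a
    | snoc hab hbc hγ ih => exact ih.snoc hab.le hbc hγ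

end PiecewiseC1On

/-! ### The intrinsic distance of a set -/

section IntrinsicDist

variable {E : Type*} [NormedAddCommGroup E] [NormedSpace ℝ E] {S : Set E} {ξ η ζ : E}

/-- The lengths of the piecewise `C¹` curves in `S` from `ξ` to `η`. -/
def joiningLengths (S : Set E) (ξ η : E) : Set ℝ :=
  {L | ∃ γ : ℝ → E, C1Chain γ 0 1 ∧ MapsTo γ (Icc 0 1) S ∧ γ 0 = ξ ∧ γ 1 = η ∧
    L = curveLength γ 0 1}

/-- The intrinsic distance `H` of the set `S`, with the junk value `0` for two points that are not
joined by a curve in `S`. -/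
def intrinsicDist (S : Set E) (ξ η : E) : ℝ :=
  sInf (joiningLengths S ξ η)

lemma bddBelow_joiningLengths : BddBelow (joiningLengths S ξ η) :=
  ⟨0, by rintro _ ⟨γ, -, -, -, -, rfl⟩; exact curveLength_nonneg zero_le_one⟩

lemma joiningLengths_subset_swap (S : Set E) (ξ η : E) :
    joiningLengths S ξ η ⊆ joiningLengths S η ξ := by
  rintro _ ⟨γ, hγ, hS, h0, h1, rfl⟩
  refine ⟨fun t => γ (1 - t), by simpa using hγ.comp_const_sub 1, fun t ht => ?_, by simpa,
    by simpa, by simp [curveLength_comp_const_sub]⟩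
  exact hS ⟨by linarith [ht.2], by linarith [ht.1]⟩

lemma joiningLengths_comm (S : Set E) (ξ η : E) : joiningLengths S ξ η = joiningLengths S η ξ :=
  (joiningLengths_subset_swap S ξ η).antisymm (joiningLengths_subset_swap S η ξ)

open scoped Pointwise in
lemma joiningLengths_add_subset (S : Set E) (ξ η ζ : E) :
    joiningLengths S ξ η + joiningLengths S η ζ ⊆ joiningLengths S ξ ζ := by
  rintro _ ⟨_, ⟨α, hα, hαS, hα0, hα1, rfl⟩, _, ⟨β, hβ, hβS, hβ0, hβ1, rfl⟩, rfl⟩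
  have h : α 1 = β 0 := hα1.trans hβ0.symm
  refine ⟨curveConcat α β, hα.curveConcat_left.trans (hβ.curveConcat_right h),
    mapsTo_curveConcat hαS hβS, ?_, ?_, (curveLength_curveConcat hα hβ h).symm⟩
  · simpa [curveConcat] using hα0
  · norm_num [curveConcat, hβ1]

lemma intrinsicDist_comm (S : Set E) (ξ η : E) : intrinsicDist S ξ η = intrinsicDist S η ξ := by
  rw [intrinsicDist, joiningLengths_comm, intrinsicDist]

lemma intrinsicDist_triangle (hξη : (joiningLengths S ξ η).Nonempty)
    (hηζ : (joiningLengths S η ζ).Nonempty) :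
    intrinsicDist S ξ ζ ≤ intrinsicDist S ξ η + intrinsicDist S η ζ := by
  unfold intrinsicDist
  rw [← csInf_add hξη bddBelow_joiningLengths hηζ bddBelow_joiningLengths]
  exact csInf_le_csInf bddBelow_joiningLengths (hξη.add hηζ) (joiningLengths_add_subset S ξ η ζ)

lemma bdist_eq_intrinsicDist {d : ℕ} (D : Set (Euc d)) : bdist D = intrinsicDist (frontier D) := by
  ext ξ η
  simp only [bdist, piecewiseC1On_iff_c1Chain]
  rfl

end IntrinsicDist

/-! ### Curves in hypersurfaces -/

section Hypersurface

open scoped Topology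

variable {E F G : Type*} [NormedAddCommGroup E] [NormedSpace ℝ E] [NormedAddCommGroup F]
  [NormedSpace ℝ F] [NormedAddCommGroup G] [NormedSpace ℝ G] {S : Set E} {ξ η : E}

/-- A `C¹` hypersurface: near each of its points, `S` is the zero set of a `C¹` function with
nonzero differential at that point. -/
def IsC1Hypersurface (S : Set E) : Prop :=
  ∀ ξ ∈ S, ∃ u : E → ℝ, ContDiffAt ℝ 1 u ξ ∧ fderiv ℝ u ξ ≠ 0 ∧ ∀ᶠ x in 𝓝 ξ, x ∈ S ↔ u x = 0

lemma joiningLengths_nonempty_of_convex {B : Set G} (hB : Convex ℝ B) {ψ : G → E}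
    (hψ : ContDiffOn ℝ 1 ψ B) (hψS : MapsTo ψ B S) {y z : G} (hy : y ∈ B) (hz : z ∈ B) :
    (joiningLengths S (ψ y) (ψ z)).Nonempty := by
  have segment_mem : MapsTo (AffineMap.lineMap (k := ℝ) y z) (Icc 0 1) B := fun t ht =>
    hB.lineMap_mem hy hz ht
  have hline : ContDiffOn ℝ 1 (AffineMap.lineMap (k := ℝ) y z) (Icc 0 1) :=
    ContDiff.contDiffOn (by fun_prop)
  exact ⟨_, ψ ∘ AffineMap.lineMap (k := ℝ) y z,
    .of_contDiffOn zero_le_one (hψ.comp hline segment_mem), hψS.comp segment_mem,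
    by simp, by simp, rfl⟩

lemma eventually_joiningLengths_nonempty_of_leftInverse {ψ : G → E} {g : E → G}
    (hψ : ContDiffAt ℝ 1 ψ (g ξ)) (hg : ContinuousAt g ξ) (hψS : ∀ᶠ z in 𝓝 (g ξ), ψ z ∈ S)
    (hψg : ∀ᶠ η in 𝓝[S] ξ, ψ (g η) = η) (hξ : ξ ∈ S) :
    ∀ᶠ η in 𝓝[S] ξ, (joiningLengths S ξ η).Nonempty := by
  obtain ⟨r, hr, hball⟩ :=
    Metric.eventually_nhds_iff_ball.1 ((hψ.eventually (by simp)).and hψS)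
  filter_upwards [hψg, nhdsWithin_le_nhds (hg (ball_mem_nhds _ hr))] with η hη hηr
  rw [← hψg.self_of_nhdsWithin hξ, ← hη]
  exact joiningLengths_nonempty_of_convex (convex_ball (g ξ) r)
    (fun z hz => (hball z hz).1.contDiffWithinAt) (fun z hz => (hball z hz).2)
    (mem_ball_self hr) hηr

lemma eventually_joiningLengths_nonempty_of_implicitFunctionData [CompleteSpace E]
    [CompleteSpace F] [CompleteSpace G] (φ : ImplicitFunctionData ℝ E F G)
    (hl : ContDiffAt ℝ 1 φ.leftFun φ.pt) (hr : ContDiffAt ℝ 1 φ.rightFun φ.pt)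
    (hS : ∀ᶠ x in 𝓝 φ.pt, x ∈ S ↔ φ.leftFun x = φ.leftFun φ.pt) :
    ∀ᶠ η in 𝓝[S] φ.pt, (joiningLengths S φ.pt η).Nonempty := by
  let ψ := φ.implicitFunction (φ.leftFun φ.pt)
  have hψ : ContDiffAt ℝ 1 ψ (φ.rightFun φ.pt) :=
    (φ.contDiffAt_implicitFunction hl hr one_ne_zero).comp (φ.rightFun φ.pt)
      (contDiffAt_const.prodMk contDiffAt_id)
  have hψ_pt : ψ (φ.rightFun φ.pt) = φ.pt := φ.implicitFunction_apply_image.self_of_nhds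
  have hψS : ∀ᶠ z in 𝓝 (φ.rightFun φ.pt), ψ z ∈ S := by
    have hψ_tendsto : Tendsto ψ (𝓝 (φ.rightFun φ.pt)) (𝓝 φ.pt) := by
      simpa only [hψ_pt] using hψ.continuousAt.tendsto
    filter_upwards [hψ_tendsto.eventually hS,
      φ.leftFun_implicitFunction.curry_nhds.self_of_nhds] with z hz hleft
    exact hz.2 hleft
  have hψ_right : ∀ᶠ η in 𝓝[S] φ.pt, ψ (φ.rightFun η) = η := by
    filter_upwards [self_mem_nhdsWithin, nhdsWithin_le_nhds hS,
      nhdsWithin_le_nhds φ.leftFun_eq_iff_implicitFunction] with η hηS hη hinv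
    exact hinv.1 (hη.1 hηS)
  exact eventually_joiningLengths_nonempty_of_leftInverse hψ hr.continuousAt hψS hψ_right
    (hS.self_of_nhds.2 rfl)

lemma eventually_joiningLengths_nonempty_of_levelSet [CompleteSpace E] [CompleteSpace F]
    {u : E → F} (hu : ContDiffAt ℝ 1 u ξ) (hsurj : (fderiv ℝ u ξ).range = ⊤)
    (hker : (fderiv ℝ u ξ).ker.ClosedComplemented) (hS : ∀ᶠ x in 𝓝 ξ, x ∈ S ↔ u x = u ξ) :
    ∀ᶠ η in 𝓝[S] ξ, (joiningLengths S ξ η).Nonempty :=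
  eventually_joiningLengths_nonempty_of_implicitFunctionData
    ((hu.hasStrictFDerivAt one_ne_zero).implicitFunctionDataOfComplemented u _ hsurj hker) hu
    ((ContinuousLinearMap.contDiff _).comp (contDiff_id.sub contDiff_const)).contDiffAt hS

lemma IsC1Hypersurface.eventually_joiningLengths_nonempty [CompleteSpace E]
    (hS : IsC1Hypersurface S) (hξ : ξ ∈ S) :
    ∀ᶠ η in 𝓝[S] ξ, (joiningLengths S ξ η).Nonempty := by
  obtain ⟨u, hu, hdu, hSu⟩ := hS ξ hξ
  have huξ : u ξ = 0 := hSu.self_of_nhds.1 hξ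
  have hsurj : (fderiv ℝ u ξ).range = ⊤ :=
    LinearMap.range_eq_top.2 (LinearMap.surjective (by exact_mod_cast hdu))
  exact eventually_joiningLengths_nonempty_of_levelSet hu hsurj
    (fderiv ℝ u ξ).ker_closedComplemented_of_finiteDimensional_range (by rwa [huξ])

lemma IsC1Hypersurface.joiningLengths_nonempty [CompleteSpace E] (hS : IsC1Hypersurface S)
    (hconn : IsPreconnected S) (hξ : ξ ∈ S) (hη : η ∈ S) : (joiningLengths S ξ η).Nonempty := by
  refine hconn.induction₂ (fun ξ η => (joiningLengths S ξ η).Nonempty) ?_ ?_ ?_ hξ hη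
  · exact fun ξ hξ => hS.eventually_joiningLengths_nonempty hξ
  · exact fun ξ η ζ _ _ _ hξη hηζ => (hξη.add hηζ).mono (joiningLengths_add_subset S ξ η ζ)
  · exact fun ξ η _ _ h => by rwa [joiningLengths_comm]

lemma IsC2BoundedDomain.isC1Hypersurface_frontier {d : ℕ} {D : Set (Euc d)}
    (hD : IsC2BoundedDomain D) : IsC1Hypersurface (frontier D) := by
  obtain ⟨-, -, -, U, u, hU, hDU, hu, -, hzero, hdu⟩ := hD
  intro ξ hξ
  have hUξ : U ∈ 𝓝 ξ := hU.mem_nhds (hDU hξ)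
  refine ⟨u, (hu.contDiffAt hUξ).of_le one_le_two, hdu ξ hξ, ?_⟩
  filter_upwards [hUξ] with x hx
  rw [hzero]
  exact and_iff_right hx

end Hypersurface

/-! ### The boundary of a domain -/

lemma hfun_pos {d : ℕ} {D : Set (Euc d)} (hD : IsOpen D) (hne : (frontier D).Nonempty)
    {x : Euc d} (hx : x ∈ D) : 0 < hfun D x := by
  have hx' : x ∉ frontier D := (disjoint_frontier_iff_isOpen.2 hD).notMem_of_mem_right hx
  exact Real.sqrt_pos.2 ((isClosed_frontier.notMem_iff_infDist_pos hne).1 hx')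

theorem dH_four_point_condition_general {d : ℕ} {D : Set (Euc d)} (hD : IsOpen D)
    (hS : IsC1Hypersurface (frontier D)) (hconn : IsPreconnected (frontier D)) {π : Euc d → Euc d}
    (hπ : ∀ x ∈ D, π x ∈ frontier D ∧ dist x (π x) = infDist x (frontier D)) :
    FourPoint (fun x y : D => dH D π x y) (4 * Real.log 2) := by
  have joined (x y : D) : (joiningLengths (frontier D) (π x) (π y)).Nonempty :=
    hS.joiningLengths_nonempty hconn (hπ x x.2).1 (hπ y y.2).1
  refine fourPoint_fillingDist (H := fun x y : D => bdist D (π x) (π y))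
    (h := fun x : D => hfun D x) ?_ ?_ fun x => hfun_pos hD ⟨π x, (hπ x x.2).1⟩ x.2
  · intro x y
    rw [bdist_eq_intrinsicDist, intrinsicDist_comm]
  · intro x y z
    rw [bdist_eq_intrinsicDist]
    exact intrinsicDist_triangle (joined x y) (joined y z)

/-- The hyperbolic filling distance `d_H` satisfies the four-point
condition with constant `4 log 2`; in particular `(D, d_H)` is Gromov hyperbolic with
`δ = 2 log 2`. -/
theorem dH_four_point_condition
    (d : ℕ) (hd : 3 ≤ d) (D : Set (Euc d)) (hD : IsC2BoundedDomain D)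
    (hfc : IsConnected (frontier D)) (π : Euc d → Euc d)
    (hπ : ∀ x ∈ D, π x ∈ frontier D ∧ dist x (π x) = Metric.infDist x (frontier D)) :
    ∀ x₁ ∈ D, ∀ x₂ ∈ D, ∀ x₃ ∈ D, ∀ x₄ ∈ D,
      dH D π x₁ x₂ + dH D π x₃ x₄ ≤
        max (dH D π x₁ x₃ + dH D π x₂ x₄) (dH D π x₁ x₄ + dH D π x₂ x₃)
          + 4 * Real.log 2 := fun x₁ h₁ x₂ h₂ x₃ h₃ x₄ h₄ =>
  dH_four_point_condition_general hD.1 hD.isC1Hypersurface_frontier hfc.isPreconnected hπ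
    ⟨x₁, h₁⟩ ⟨x₂, h₂⟩ ⟨x₃, h₃⟩ ⟨x₄, h₄⟩
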